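/- If M(n) = 0 for a positive integer n, witnessed by a nontrivial equal-area Mondrian tiling S of the n×n square with common rectangle area d, then d is a proper divisor of n² (d | n² and d ≠ n²) and n² = d·|S| ≤ d·τ(d). -/

import Mathlib

/-!
The rectangles cover the square, so their areas sum to at least `n ^ 2`; their interiors are
disjoint subsets of the square with the same areas, so the sum is also at most `n ^ 2`. Hence
`n ^ 2 = d * |S|` (`tiling_area`), and `|S| ≥ 2` makes `d` a proper divisor. Since all areas
equal `d`, a rectangle is determined up to congruence by its width, which divides `d`; as no two
rectangles of `S` are congruent, `|S| ≤ τ(d)`.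
-/

/-- An axis-parallel rectangle with positive integer side lengths,
placed at real coordinates `(x, y)` with width `w` and height `h`. -/
structure Rect where
  x : ℝ
  y : ℝ
  w : ℕ
  h : ℕ
  w_pos : 0 < w
  h_pos : 0 < h

namespace Rect

/-- The (closed) set of points covered by a rectangle. -/
def toSet (r : Rect) : Set (ℝ × ℝ) :=
  Set.Icc r.x (r.x + r.w) ×ˢ Set.Icc r.y (r.y + r.h)

/-- The (open) interior of a rectangle. -/
def interiorSet (r : Rect) : Set (ℝ × ℝ) :=
  Set.Ioo r.x (r.x + r.w) ×ˢ Set.Ioo r.y (r.y + r.h)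

/-- Two rectangles are congruent iff they have the same unordered pair
of side lengths. -/
def Congruent (r s : Rect) : Prop :=
  (r.w = s.w ∧ r.h = s.h) ∨ (r.w = s.h ∧ r.h = s.w)

end Rect

noncomputable instance : DecidableEq Rect := Classical.decEq _

/-- `S` is a finite collection of axis-parallel rectangles with positive
integer side lengths, with pairwise disjoint interiors, whose union is
the `n × n` square. -/
def IsRectTiling (n : ℕ) (S : Finset Rect) : Prop :=
  (⋃ r ∈ S, r.toSet) = Set.Icc (0 : ℝ) (n : ℝ) ×ˢ Set.Icc (0 : ℝ) (n : ℝ) ∧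
  ∀ r ∈ S, ∀ s ∈ S, r ≠ s → r.interiorSet ∩ s.interiorSet = ∅

/-- A Mondrian tiling: a rectangle tiling of the `n × n` square in which
no two rectangles are congruent. -/
def IsMondrianTiling (n : ℕ) (S : Finset Rect) : Prop :=
  IsRectTiling n S ∧ ∀ r ∈ S, ∀ s ∈ S, r ≠ s → ¬ r.Congruent s

/-- `M(n) = 0`: there is a nontrivial Mondrian tiling of the `n × n` square
in which all rectangles have the same area. -/
def MondrianZero (n : ℕ) : Prop :=
  ∃ S : Finset Rect, IsMondrianTiling n S ∧ 2 ≤ S.card ∧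
    ∃ d : ℕ, ∀ r ∈ S, r.w * r.h = d

open MeasureTheory in
lemma Rect.volume_toSet (r : Rect) : volume r.toSet = ((r.w * r.h : ℕ) : ENNReal) := by
  rw [Rect.toSet, Measure.volume_eq_prod, Measure.prod_prod, Real.volume_Icc, Real.volume_Icc]
  simp

open MeasureTheory in
lemma Rect.volume_interiorSet (r : Rect) :
    volume r.interiorSet = ((r.w * r.h : ℕ) : ENNReal) := by
  rw [Rect.interiorSet, Measure.volume_eq_prod, Measure.prod_prod, Real.volume_Ioo,
    Real.volume_Ioo]
  simp

lemma Rect.interiorSet_subset_toSet (r : Rect) : r.interiorSet ⊆ r.toSet :=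
  Set.prod_mono Set.Ioo_subset_Icc_self Set.Ioo_subset_Icc_self

open MeasureTheory in
/-- Lebesgue measure is squeezed between the disjoint union of the interiors and the
(almost disjoint) union of the closed rectangles, so no null-boundary argument is needed. -/
lemma tiling_area (n : ℕ) (S : Finset Rect) (hS : IsRectTiling n S) :
    n ^ 2 = ∑ r ∈ S, r.w * r.h := by
  obtain ⟨hcover, hdisj⟩ := hS
  have hsq : volume (⋃ r ∈ S, r.toSet) = ((n ^ 2 : ℕ) : ENNReal) := by
    rw [hcover, Measure.volume_eq_prod, Measure.prod_prod, Real.volume_Icc]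
    simp [sq]
  apply le_antisymm
  · have h := measure_biUnion_finset_le (μ := volume) S Rect.toSet
    rw [hsq, Finset.sum_congr rfl fun r _ => r.volume_toSet] at h
    exact_mod_cast h
  · have h : volume (⋃ r ∈ S, r.interiorSet) ≤ volume (⋃ r ∈ S, r.toSet) :=
      measure_mono (Set.iUnion₂_mono fun r _ => r.interiorSet_subset_toSet)
    rw [hsq, measure_biUnion_finset
      (fun r hr s hs hrs => Set.disjoint_iff_inter_eq_empty.mpr (hdisj r hr s hs hrs))
      (fun r _ => measurableSet_Ioo.prod measurableSet_Ioo),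
      Finset.sum_congr rfl fun r _ => r.volume_interiorSet] at h
    exact_mod_cast h

/-- If `M(n) = 0` is witnessed by a nontrivial equal-area Mondrian tiling `S`
of the `n × n` square with common rectangle area `d`, then `d` is a proper
divisor of `n²` and `n² = d·|S| ≤ d·τ(d)`. -/
theorem stmt13 (n d : ℕ) (hn : 0 < n) (S : Finset Rect)
    (hS : IsMondrianTiling n S) (hcard : 2 ≤ S.card)
    (harea : ∀ r ∈ S, r.w * r.h = d) :
    d ∣ n ^ 2 ∧ d ≠ n ^ 2 ∧ n ^ 2 = d * S.card ∧
      d * S.card ≤ d * (Nat.divisors d).card := by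
  obtain ⟨hT, hcong⟩ := hS
  have hsum : n ^ 2 = d * S.card := by
    rw [tiling_area n S hT, Finset.sum_congr rfl harea, Finset.sum_const, smul_eq_mul, mul_comm]
  have hd : 0 < d := Nat.pos_of_mul_pos_right (hsum ▸ pow_pos hn 2)
  refine ⟨⟨_, hsum⟩, by nlinarith, hsum, Nat.mul_le_mul_left d ?_⟩
  refine Finset.card_le_card_of_injOn Rect.w
    (fun r hr => Nat.mem_divisors.mpr ⟨⟨_, (harea r hr).symm⟩, hd.ne'⟩) ?_
  intro r hr s hs hw
  by_contra hne
  have hh : r.w * r.h = r.w * s.h := by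
    rw [harea r hr, show r.w = s.w from hw, harea s hs]
  exact hcong r hr s hs hne (Or.inl ⟨hw, Nat.eq_of_mul_eq_mul_left r.w_pos hh⟩)
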